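/- Let q ≥ 2 and L ≥ 2 be integers and let C ⊆ [q]^n be a code. If the matrix φ(C)/√((q−1)n) satisfies RIP-2 of order L with constant 1/2, then every set of L distinct codewords of C has average pairwise relative Hamming distance at least (1 − 1/q)·(1 − 1/(2(L−1))). -/

import Mathlib

open scoped BigOperators

/-- Relative Hamming distance between two strings of length n. -/
noncomputable def relDist {n : ℕ} {A : Type*} (x y : Fin n → A) : ℝ :=
  ({i : Fin n | x i ≠ y i}.ncard : ℝ) / (n : ℝ)

/-- A code C ⊆ A^n is (ρ, L)-list decodable if every Hamming ball of relative
radius (strictly) ρ contains at most L codewords. -/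
def listDecodable {n : ℕ} {A : Type*} (C : Set (Fin n → A)) (ρ L : ℝ) : Prop :=
  ∀ y : Fin n → A, ({c | c ∈ C ∧ relDist c y < ρ}.ncard : ℝ) ≤ L

/-- Average pairwise relative Hamming distance of an L-tuple of codewords. -/
noncomputable def avgPairDist {n L : ℕ} {A : Type*} (c : Fin L → (Fin n → A)) : ℝ :=
  (∑ i : Fin L, ∑ j : Fin L, if i < j then relDist (c i) (c j) else 0) / (L.choose 2 : ℝ)

/-- Simplex encoding of a symbol x ∈ {0,…,q−1}: the vector (ω^{x·α})_{α ∈ {1,…,q−1}}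
in ℂ^{q−1}, where ω = e^{2πi/q}. -/
noncomputable def simplexEnc (q : ℕ) (x : ℕ) (α : Fin (q - 1)) : ℂ :=
  Complex.exp (2 * (Real.pi : ℂ) * Complex.I * (x : ℂ) * (((α : ℕ) : ℂ) + 1) / (q : ℂ))

/-- Coordinatewise extension of the simplex encoding to strings in [q]^n,
giving a vector in ℂ^{(q−1)n}. -/
noncomputable def simplexEncVec (q n : ℕ) (x : Fin n → Fin q) : Fin n × Fin (q - 1) → ℂ :=
  fun p => simplexEnc q (x p.1 : ℕ) p.2

/-- A complex matrix M satisfies RIP-2 of order k with constant δ if for every vector x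
with at most k nonzero coordinates, (1−δ)‖x‖₂² ≤ ‖Mx‖₂² ≤ (1+δ)‖x‖₂². -/
def RIP2 {R C : Type*} [Fintype R] [Fintype C] (M : Matrix R C ℂ) (k : ℕ) (δ : ℝ) : Prop :=
  ∀ x : C → ℂ, ({c | x c ≠ 0}.ncard ≤ k) →
    (1 - δ) * (∑ c, Complex.normSq (x c)) ≤ (∑ r, Complex.normSq (M.mulVec x r)) ∧
    (∑ r, Complex.normSq (M.mulVec x r)) ≤ (1 + δ) * (∑ c, Complex.normSq (x c))

/-!
Write `φ` for the simplex encoding. Summing a geometric series of `q`-th roots of unity gives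
`⟨φ(x), φ(y)⟩ = n (q - 1 - q δ(x, y))`. Hence `‖∑ᵢ φ(cᵢ)‖²`, expanded into pairwise inner products,
is `n ((q - 1) L² - q L (L - 1) Δ)`, where `Δ` is the average pairwise distance of `c₁, …, c_L`.
The upper RIP inequality for the indicator vector of the `cᵢ` bounds the same quantity by
`(1 + δ) L (q - 1) n`, and solving for `Δ` gives `(1 - 1/q) (1 - δ/(L - 1)) ≤ Δ`.
-/

open scoped Matrix

section RestrictedIsometry

variable {R C : Type*} [Fintype R] [Fintype C] {M : Matrix R C ℂ} {k : ℕ} {δ : ℝ}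

/-- The upper half of `RIP2`: the matrix `M` increases the squared norm of a vector with at most `k`
nonzero coordinates by a factor of at most `1 + δ`, which limits how far a sum of `k` columns can
exceed the length it would have if they were orthonormal. -/
def UpperRIP2 (M : Matrix R C ℂ) (k : ℕ) (δ : ℝ) : Prop :=
  ∀ x : C → ℂ, {c | x c ≠ 0}.ncard ≤ k →
    ∑ r, Complex.normSq ((M *ᵥ x) r) ≤ (1 + δ) * ∑ c, Complex.normSq (x c)

lemma RIP2.upperRIP2 (hM : RIP2 M k δ) : UpperRIP2 M k δ :=
  fun x hx => (hM x hx).2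

lemma UpperRIP2.sum_normSq_sum_col_le {ι : Type*} [Fintype ι] (hM : UpperRIP2 M k δ)
    (d : ι ↪ C) (hι : Fintype.card ι ≤ k) :
    ∑ r, Complex.normSq (∑ i, M r (d i)) ≤ (1 + δ) * Fintype.card ι := by
  classical
  let S : Finset C := Finset.univ.map d
  let x : C → ℂ := fun z => if z ∈ S then 1 else 0
  have hsupp : {z | x z ≠ 0} = S := by
    ext z
    simp [x]
  have hmulVec (r : R) : (M *ᵥ x) r = ∑ i, M r (d i) := by
    simp only [Matrix.mulVec, dotProduct, x, mul_ite, mul_one, mul_zero, Finset.sum_ite_mem,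
      Finset.univ_inter]
    exact Finset.sum_map _ d (M r)
  have hnorm : ∑ z, Complex.normSq (x z) = Fintype.card ι := by
    simp only [x, apply_ite Complex.normSq, map_one, map_zero, Finset.sum_ite_mem,
      Finset.univ_inter]
    rw [Finset.sum_const, nsmul_one, Finset.card_map, Finset.card_univ]
  have hcard : {z | x z ≠ 0}.ncard ≤ k := by
    rwa [hsupp, Set.ncard_coe_finset, Finset.card_map, Finset.card_univ]
  simpa only [hmulVec, hnorm] using hM x hcard

end RestrictedIsometry

section Distance

variable {n L : ℕ} {A : Type*}

lemma relDist_eq_hammingDist_div [DecidableEq A] (x y : Fin n → A) :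
    relDist x y = hammingDist x y / n := by
  rw [relDist, hammingDist, ← Set.ncard_coe_finset, Finset.coe_filter_univ]

lemma relDist_self (x : Fin n → A) : relDist x x = 0 := by
  simp [relDist]

lemma relDist_comm (x y : Fin n → A) : relDist x y = relDist y x := by
  simp only [relDist, ne_comm]

lemma sum_ite_eq_eq_mul_relDist [DecidableEq A] (x y : Fin n → A) :
    (∑ k, if x k = y k then 0 else 1 : ℝ) = n * relDist x y := by
  rcases eq_or_ne n 0 with rfl | hn
  · simp
  · rw [relDist_eq_hammingDist_div, mul_div_cancel₀ _ (Nat.cast_ne_zero.mpr hn), hammingDist,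
      Finset.card_filter]
    simp [ite_not]

lemma sum_sum_eq_two_mul_sum_sum_lt {ι R : Type*} [Fintype ι] [LinearOrder ι] [NonAssocSemiring R]
    {f : ι → ι → R} (hsymm : ∀ i j, f i j = f j i) (hdiag : ∀ i, f i i = 0) :
    ∑ i, ∑ j, f i j = 2 * ∑ i, ∑ j, if i < j then f i j else 0 := by
  have hsplit (i j : ι) :
      f i j = (if i < j then f i j else 0) + if j < i then f j i else 0 := by
    rcases lt_trichotomy i j with h | rfl | h
    · simp [h, h.not_gt]
    · simp [hdiag]
    · simp [h, h.not_gt, hsymm i j]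
  calc ∑ i, ∑ j, f i j
      = (∑ i, ∑ j, if i < j then f i j else 0) + ∑ i, ∑ j, if j < i then f j i else 0 := by
        simp only [← Finset.sum_add_distrib, ← hsplit]
    _ = 2 * ∑ i, ∑ j, if i < j then f i j else 0 := by
        rw [Finset.sum_comm (f := fun i j => if j < i then f j i else 0), two_mul]

lemma sum_sum_relDist (c : Fin L → Fin n → A) :
    ∑ i, ∑ j, relDist (c i) (c j) = L * (L - 1) * avgPairDist c := by
  by_cases hL : L.choose 2 = 0
  · have : Subsingleton (Fin L) := Fin.subsingleton_iff_le_one.mpr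
      (Nat.lt_succ_iff.mp (Nat.choose_eq_zero_iff.mp hL))
    have hzero (i j : Fin L) : relDist (c i) (c j) = 0 := by
      rw [Subsingleton.elim i j, relDist_self]
    simp [hzero, avgPairDist]
  · have hchoose : (L : ℝ) * (L - 1) = 2 * L.choose 2 := by
      rw [Nat.cast_choose_two]
      ring
    rw [sum_sum_eq_two_mul_sum_sum_lt (fun i j => relDist_comm (c i) (c j))
      (fun i => relDist_self (c i)), avgPairDist, hchoose, mul_assoc,
      mul_div_cancel₀ _ (Nat.cast_ne_zero.mpr hL)]

end Distance

section SimplexEncoding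

variable {q n L : ℕ}

lemma sum_range_pred_pow_succ {K : Type*} [DivisionRing K] [DecidableEq K] {ζ : K} (hq : q ≠ 0)
    (hζ : ζ ^ q = 1) :
    ∑ k ∈ Finset.range (q - 1), ζ ^ (k + 1) = if ζ = 1 then (q : K) - 1 else -1 := by
  obtain ⟨m, rfl⟩ := Nat.exists_eq_succ_of_ne_zero hq
  have hfull : ∑ k ∈ Finset.range m, ζ ^ (k + 1) = ∑ k ∈ Finset.range (m + 1), ζ ^ k - 1 := by
    simp [Finset.sum_range_succ' _ m]
  split_ifs with h
  · simp [h]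
  · simp [hfull, geom_sum_eq h, hζ]

lemma simplexEnc_eq_pow (x : ℕ) (α : Fin (q - 1)) :
    simplexEnc q x α = (Complex.exp (2 * Real.pi * Complex.I / q) ^ x) ^ ((α : ℕ) + 1) := by
  rw [simplexEnc, ← Complex.exp_nat_mul, ← Complex.exp_nat_mul]
  congr 1
  push_cast
  ring

lemma simplexEnc_dotProduct_star (x y : Fin q) :
    simplexEnc q x ⬝ᵥ star (simplexEnc q y) = (q : ℂ) - 1 - q * if x = y then 0 else 1 := by
  have hq : q ≠ 0 := x.pos.ne'
  let ω : ℂ := Complex.exp (2 * Real.pi * Complex.I / q)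
  have hω : IsPrimitiveRoot ω q := Complex.isPrimitiveRoot_exp q hq
  let ζ : ℂ := ω ^ (x : ℕ) * (ω ^ (y : ℕ))⁻¹
  have hζ : ζ ^ q = 1 := by
    simp only [ζ, mul_pow, inv_pow, pow_right_comm ω _ q, hω.pow_eq_one, one_pow, inv_one, mul_one]
  have hζ_one : ζ = 1 ↔ x = y := by
    rw [mul_inv_eq_one₀ (pow_ne_zero _ (hω.ne_zero hq)),
      hω.injOn_pow.eq_iff (by simp) (by simp), Fin.val_inj]
  have hterm (α : Fin (q - 1)) :
      simplexEnc q x α * star (simplexEnc q y α) = ζ ^ ((α : ℕ) + 1) := by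
    have hstar : star ω = ω⁻¹ := (Complex.inv_eq_conj (hω.norm'_eq_one hq)).symm
    rw [simplexEnc_eq_pow, simplexEnc_eq_pow, star_pow, star_pow, hstar, mul_pow, inv_pow]
  calc simplexEnc q x ⬝ᵥ star (simplexEnc q y)
      = ∑ k ∈ Finset.range (q - 1), ζ ^ (k + 1) := by
        simp only [dotProduct, Pi.star_apply, hterm]
        exact Fin.sum_univ_eq_sum_range (fun k => ζ ^ (k + 1)) (q - 1)
    _ = (q : ℂ) - 1 - q * if x = y then 0 else 1 := by
        rw [sum_range_pred_pow_succ hq hζ]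
        simp only [hζ_one]
        split_ifs <;> ring

lemma simplexEncVec_dotProduct_star (x y : Fin n → Fin q) :
    simplexEncVec q n x ⬝ᵥ star (simplexEncVec q n y) =
      ((n * ((q : ℝ) - 1 - q * relDist x y) : ℝ) : ℂ) := by
  calc simplexEncVec q n x ⬝ᵥ star (simplexEncVec q n y)
      = ∑ k, simplexEnc q (x k) ⬝ᵥ star (simplexEnc q (y k)) := Fintype.sum_prod_type _
    _ = ((∑ k, ((q : ℝ) - 1 - q * if x k = y k then 0 else 1) : ℝ) : ℂ) := by
        simp only [simplexEnc_dotProduct_star]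
        push_cast
        simp only [apply_ite Complex.ofReal, Complex.ofReal_zero, Complex.ofReal_one]
    _ = ((n * ((q : ℝ) - 1 - q * relDist x y) : ℝ) : ℂ) := by
        rw [Finset.sum_sub_distrib, ← Finset.mul_sum, sum_ite_eq_eq_mul_relDist, Finset.sum_const,
          Finset.card_univ, Fintype.card_fin, nsmul_eq_mul]
        congr 1
        ring

lemma sum_normSq_sum_eq_sum_dotProduct_star {ι R : Type*} [Fintype ι] [Fintype R]
    (v : ι → R → ℂ) :
    ((∑ r, Complex.normSq (∑ i, v i r) : ℝ) : ℂ) = ∑ i, ∑ j, v i ⬝ᵥ star (v j) := by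
  calc ((∑ r, Complex.normSq (∑ i, v i r) : ℝ) : ℂ)
      = ∑ r, (∑ i, v i r) * star (∑ i, v i r) := by
        simp only [Complex.ofReal_sum, ← Complex.mul_conj, ← starRingEnd_apply]
    _ = (∑ i, v i) ⬝ᵥ star (∑ i, v i) := by
        simp only [dotProduct, Pi.star_apply, Finset.sum_apply]
    _ = ∑ i, ∑ j, v i ⬝ᵥ star (v j) := by
        simp only [star_sum, sum_dotProduct, dotProduct_sum]
        exact Finset.sum_comm

lemma sum_normSq_sum_simplexEncVec (c : Fin L → Fin n → Fin q) :
    ∑ p, Complex.normSq (∑ i, simplexEncVec q n (c i) p) =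
      n * (((q : ℝ) - 1) * L ^ 2 - q * (L * (L - 1) * avgPairDist c)) := by
  have hexpand : ∑ p, Complex.normSq (∑ i, simplexEncVec q n (c i) p) =
      ∑ i, ∑ j, n * ((q : ℝ) - 1 - q * relDist (c i) (c j)) := by
    have h := sum_normSq_sum_eq_sum_dotProduct_star fun i => simplexEncVec q n (c i)
    simp only [simplexEncVec_dotProduct_star] at h
    exact_mod_cast h
  rw [hexpand, ← sum_sum_relDist]
  simp only [← Finset.mul_sum, Finset.sum_sub_distrib, Finset.sum_const, Finset.card_univ,
    Fintype.card_fin, nsmul_eq_mul]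
  ring

lemma le_avgPairDist_of_sum_normSq_sum_le {δ : ℝ} (hq : q ≠ 0) (hL : 2 ≤ L) (hn : n ≠ 0)
    {c : Fin L → Fin n → Fin q}
    (hc : ∑ p, Complex.normSq (∑ i, simplexEncVec q n (c i) p) ≤
      (1 + δ) * L * (((q : ℝ) - 1) * n)) :
    (1 - 1 / (q : ℝ)) * (1 - δ / ((L : ℝ) - 1)) ≤ avgPairDist c := by
  have hq_pos : (0 : ℝ) < q := by positivity
  have hn_pos : (0 : ℝ) < n := by positivity
  have hL_two : (2 : ℝ) ≤ L := by exact_mod_cast hL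
  have hL_pred : (0 : ℝ) < (L : ℝ) - 1 := by linarith
  rw [sum_normSq_sum_simplexEncVec] at hc
  have hbound : ((q : ℝ) - 1) * L - q * ((L - 1) * avgPairDist c) ≤ (1 + δ) * (q - 1) := by
    refine le_of_mul_le_mul_left ?_ (show (0 : ℝ) < n * L by positivity)
    linarith
  calc (1 - 1 / (q : ℝ)) * (1 - δ / ((L : ℝ) - 1))
      = ((q : ℝ) - 1) * (L - 1 - δ) / (q * (L - 1)) := by field_simp
    _ ≤ avgPairDist c := by
        rw [div_le_iff₀ (by positivity)]
        linarith

/-- The matrix `φ(C) / √((q - 1) n)`, whose columns are the simplex encodings of the codewords of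
`C`, scaled to be unit vectors when `2 ≤ q` and `n ≠ 0`. -/
noncomputable def simplexMatrix (C : Set (Fin n → Fin q)) : Matrix (Fin n × Fin (q - 1)) C ℂ :=
  fun p c => simplexEncVec q n c p / ((Real.sqrt (((q : ℝ) - 1) * n) : ℝ) : ℂ)

lemma sum_normSq_sum_simplexMatrix {ι : Type*} [Fintype ι] {C : Set (Fin n → Fin q)}
    (hq : q ≠ 0) (d : ι → C) :
    ∑ p, Complex.normSq (∑ i, simplexMatrix C p (d i)) =
      (∑ p, Complex.normSq (∑ i, simplexEncVec q n (d i) p)) / (((q : ℝ) - 1) * n) := by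
  have hscale : (0 : ℝ) ≤ ((q : ℝ) - 1) * n :=
    mul_nonneg (sub_nonneg.mpr (Nat.one_le_cast.mpr (Nat.one_le_iff_ne_zero.mpr hq)))
      n.cast_nonneg
  simp only [simplexMatrix, ← Finset.sum_div, Complex.normSq_div, Complex.normSq_ofReal,
    Real.mul_self_sqrt hscale]

end SimplexEncoding

theorem stmt7_general {q L n : ℕ} {δ : ℝ} (hq : 2 ≤ q) (hL : 2 ≤ L) {C : Set (Fin n → Fin q)}
    [Fintype C] (hRIP : UpperRIP2 (simplexMatrix C) L δ) {c : Fin L → Fin n → Fin q}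
    (hc : Function.Injective c) (hcC : ∀ i, c i ∈ C) :
    (1 - 1 / (q : ℝ)) * (1 - δ / ((L : ℝ) - 1)) ≤ avgPairDist c := by
  have hq_zero : q ≠ 0 := by omega
  have hn : n ≠ 0 := by
    rintro rfl
    have : Nontrivial (Fin L) := Fin.nontrivial_iff_two_le.mpr hL
    exact not_subsingleton (Fin L) hc.subsingleton
  have hscale : (0 : ℝ) < ((q : ℝ) - 1) * n :=
    mul_pos (sub_pos.mpr (Nat.one_lt_cast.mpr hq)) (Nat.cast_pos.mpr (Nat.pos_of_ne_zero hn))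
  let d : Fin L ↪ C := ⟨fun i => ⟨c i, hcC i⟩, fun _ _ h => hc (congrArg Subtype.val h)⟩
  have hcols := hRIP.sum_normSq_sum_col_le d (Fintype.card_fin L).le
  rw [sum_normSq_sum_simplexMatrix hq_zero, div_le_iff₀ hscale, Fintype.card_fin] at hcols
  exact le_avgPairDist_of_sum_normSq_sum_le hq_zero hL hn hcols

/-- If the matrix φ(C)/√((q−1)n) (columns indexed by codewords of C)
satisfies RIP-2 of order L with constant 1/2, then every L distinct codewords of C have
average pairwise relative distance at least (1 − 1/q)(1 − 1/(2(L−1))). -/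
theorem stmt7 (q L n : ℕ) (hq : 2 ≤ q) (hL : 2 ≤ L)
    (C : Set (Fin n → Fin q)) [Fintype C]
    (hRIP : RIP2 (fun (p : Fin n × Fin (q - 1)) (c : C) =>
        simplexEncVec q n (c : Fin n → Fin q) p /
          ((Real.sqrt (((q : ℝ) - 1) * n) : ℝ) : ℂ)) L (1 / 2)) :
    ∀ c : Fin L → (Fin n → Fin q), Function.Injective c → (∀ i, c i ∈ C) →
      (1 - 1 / (q : ℝ)) * (1 - 1 / (2 * ((L : ℝ) - 1))) ≤ avgPairDist c := by
  intro c hc hcC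
  simpa only [div_div] using stmt7_general hq hL (RIP2.upperRIP2 hRIP) hc hcC
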